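/- Let (X,W,d) be a strictly convex complete convex metric space and let Y be a nonempty compact convex subset of X. Then every continuous map f : Y → Y has a fixed point in Y. -/

import Mathlib

namespace Scarf

def Dom {V I α : Type*} [LinearOrder α] (r : I → V → α) (B : Finset V) : Prop :=
  ∀ v, ∃ i, ∀ b ∈ B, r i v ≤ r i b

theorem Dom.mono {V I α : Type*} [LinearOrder α] {r : I → V → α} {B D : Finset V}
    (h : Dom r B) (hD : D ⊆ B) : Dom r D := by
  intro v
  obtain ⟨i, hi⟩ := h v
  exact ⟨i, fun b hb => hi b (hD hb)⟩

theorem two_rooms {V I α : Type*} [LinearOrder α] [Fintype V] [DecidableEq V] [Fintype I]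
    [DecidableEq I] (r : I → V → α) (hr : ∀ i, Function.Injective (r i)) (B : Finset V)
    (hB : Dom r B) (hne : B.Nonempty) (hc : B.card + 1 = Fintype.card I)
    (hM : ∀ i, ∃ v, ∀ k, k ≠ i → ∃ b ∈ B, r k b < r k v) :
    ∃ x y, x ≠ y ∧ ∀ z, (z ∉ B ∧ Dom r (insert z B)) ↔ (z = x ∨ z = y) := by
  classical
  have hm0 : ∀ k, ∃ m ∈ B, ∀ b ∈ B, r k m ≤ r k b := fun k => B.exists_min_image (r k) hne
  choose m hmB hm using hm0
  have hsurj : ∀ b ∈ B, ∃ k, m k = b := by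
    intro b hb
    obtain ⟨k, hk⟩ := hB b
    exact ⟨k, hr k (le_antisymm (hm k b hb) (hk _ (hmB k)))⟩
  obtain ⟨i, -, j, -, hij, hmij⟩ := Finset.exists_ne_map_eq_of_card_lt_of_maps_to
    (s := (Finset.univ : Finset I)) (t := B) (f := m) (by rw [Finset.card_univ]; omega)
    (fun k _ => hmB k)
  -- candidates
  have hX : ∀ p, ∃ x, (∀ k, k ≠ p → r k (m k) < r k x) ∧
      ∀ v, (∀ k, k ≠ p → r k (m k) < r k v) → r p v ≤ r p x := by
    intro p
    obtain ⟨v, hv⟩ := hM p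
    have : (Finset.univ.filter (fun v => ∀ k, k ≠ p → r k (m k) < r k v)).Nonempty := by
      refine ⟨v, Finset.mem_filter.2 ⟨Finset.mem_univ _, fun k hk => ?_⟩⟩
      obtain ⟨b, hb, h⟩ := hv k hk
      exact (hm k b hb).trans_lt h
    obtain ⟨x, hx, hmax⟩ := Finset.exists_max_image _ (r p) this
    refine ⟨x, (Finset.mem_filter.1 hx).2, fun v hv => hmax v ?_⟩
    exact Finset.mem_filter.2 ⟨Finset.mem_univ _, hv⟩
  choose X hX1 hX2 using hX
  have hgood : ∀ p q, p ≠ q → m p = m q → X p ∉ B ∧ Dom r (insert (X p) B) := by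
    intro p q hpq hmpq
    constructor
    · intro hin
      obtain ⟨k, hk⟩ := hsurj _ hin
      by_cases hkp : k = p
      · subst hkp
        have := hX1 k q (Ne.symm hpq)
        rw [← hmpq, hk] at this
        exact lt_irrefl _ this
      · have := hX1 p k hkp
        rw [hk] at this
        exact lt_irrefl _ this
    · intro v
      by_cases hv : ∀ k, k ≠ p → r k (m k) < r k v
      · refine ⟨p, fun b hb => ?_⟩
        rcases Finset.mem_insert.1 hb with rfl | hb'
        · exact hX2 p v hv
        · obtain ⟨k, hk⟩ := hB v
          have hkp : k = p := by
            by_contra h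
            exact absurd (hk _ (hmB k)) (not_le.2 (hv k h))
          subst hkp
          exact hk b hb'
      · push Not at hv
        obtain ⟨k, hkp, hk⟩ := hv
        refine ⟨k, fun b hb => ?_⟩
        rcases Finset.mem_insert.1 hb with rfl | hb
        · exact hk.trans (hX1 p k hkp).le
        · exact hk.trans (hm k b hb)
  refine ⟨X i, X j, ?_, fun z => ⟨?_, ?_⟩⟩
  · intro h
    obtain ⟨k, hk⟩ := hB (X i)
    have h1 := hk _ (hmB k)
    by_cases hki : k = i
    · have := hX1 j k (hki ▸ hij)
      rw [← h] at this
      exact absurd h1 (not_le.2 this)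
    · exact absurd h1 (not_le.2 (hX1 i k hki))
  · rintro ⟨hzB, hz⟩
    obtain ⟨p, hp⟩ := hz z
    have hq0 : ∀ b, ∃ k, b ∈ B → ∀ b' ∈ insert z B, r k b ≤ r k b' := by
      intro b
      obtain ⟨k, hk⟩ := hz b
      exact ⟨k, fun _ => hk⟩
    choose q hq using hq0
    have hzb : ∀ b ∈ B, b ≠ z := fun b hb h => hzB (h ▸ hb)
    have himg : B.image q = Finset.univ.erase p := by
      apply Finset.eq_of_subset_of_card_le
      · intro k hk
        obtain ⟨b, hb, rfl⟩ := Finset.mem_image.1 hk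
        refine Finset.mem_erase.2 ⟨fun h => ?_, Finset.mem_univ _⟩
        have h1 := hq b hb z (Finset.mem_insert_self _ _)
        have h2 := hp b (Finset.mem_insert_of_mem hb)
        rw [h] at h1
        exact hzb b hb (hr p (le_antisymm h1 h2))
      · rw [Finset.card_erase_of_mem (Finset.mem_univ _), Finset.card_univ,
          Finset.card_image_of_injOn]
        · omega
        · intro b hb b' hb' h
          have h1 := hq b hb b' (Finset.mem_insert_of_mem hb')
          have h2 := hq b' hb' b (Finset.mem_insert_of_mem hb)
          rw [← h] at h2
          exact hr _ (le_antisymm h1 h2)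
    have hk : ∀ k, k ≠ p → q (m k) = k ∧ r k (m k) < r k z := by
      intro k hkp
      have : k ∈ B.image q := by rw [himg]; exact Finset.mem_erase.2 ⟨hkp, Finset.mem_univ _⟩
      obtain ⟨b, hb, rfl⟩ := Finset.mem_image.1 this
      have hmb : m (q b) = b := hr (q b) (le_antisymm (hm _ b hb)
        (hq b hb _ (Finset.mem_insert_of_mem (hmB _))))
      rw [hmb]
      refine ⟨rfl, lt_of_le_of_ne (hq b hb z (Finset.mem_insert_self _ _)) ?_⟩
      exact fun h => hzb b hb (hr _ h)
    have hzX : z = X p := by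
      apply hr p
      apply le_antisymm (hX2 p z fun k hkp => (hk k hkp).2)
      obtain ⟨k, hk'⟩ := hz (X p)
      have hkp : k = p := by
        by_contra h
        exact absurd (hk' _ (Finset.mem_insert_of_mem (hmB k))) (not_le.2 (hX1 p k h))
      subst hkp
      exact hk' z (Finset.mem_insert_self _ _)
    have hpij : p = i ∨ p = j := by
      by_contra h
      push Not at h
      apply hij
      rw [← (hk i h.1.symm).1, ← (hk j h.2.symm).1, hmij]
    rcases hpij with rfl | rfl
    · exact Or.inl hzX
    · exact Or.inr hzX
  · rintro (rfl | rfl)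
    · exact hgood i j hij hmij
    · exact hgood j i hij.symm hmij.symm

theorem room_even {V I : Type*} [DecidableEq V] [Fintype I] [DecidableEq I] (col : V → I) (i0 : I)
    (B : Finset V) (hc : B.card = Fintype.card I) (hB : B.image col ≠ Finset.univ) :
    Even (B.filter (fun x => (B.erase x).image col = Finset.univ.erase i0)).card := by
  rcases (B.filter (fun x => (B.erase x).image col = Finset.univ.erase i0)).eq_empty_or_nonempty
    with h | ⟨x, hx⟩
  · rw [h]; simp
  obtain ⟨hxB, hx⟩ := Finset.mem_filter.1 hx
  have hinj : Set.InjOn col (B.erase x) := by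
    apply Finset.card_image_iff.1
    rw [hx, Finset.card_erase_of_mem (Finset.mem_univ _), Finset.card_erase_of_mem hxB, hc,
      Finset.card_univ]
  have hmem : ∀ i, i ≠ i0 ↔ ∃ b, (b ≠ x ∧ b ∈ B) ∧ col b = i := by
    intro i
    have := Finset.ext_iff.1 hx i
    simp only [Finset.mem_image, Finset.mem_erase, Finset.mem_univ, and_true] at this
    exact this.symm
  have hxi : col x ≠ i0 := by
    intro h
    apply hB
    ext i
    simp only [Finset.mem_image, Finset.mem_univ, iff_true]
    by_cases hi : i = i0
    · exact ⟨x, hxB, by rw [h, hi]⟩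
    · obtain ⟨b, hb, h⟩ := (hmem i).1 hi
      exact ⟨b, hb.2, h⟩
  obtain ⟨y, ⟨hyx, hyB⟩, hy⟩ := (hmem _).1 hxi
  have : B.filter (fun x => (B.erase x).image col = Finset.univ.erase i0) = {x, y} := by
    ext z
    simp only [Finset.mem_filter, Finset.mem_insert, Finset.mem_singleton]
    constructor
    · rintro ⟨hzB, hz⟩
      by_contra h
      push Not at h
      have h1 : col z ∈ (B.erase z).image col := by
        rw [hz]
        exact Finset.mem_erase.2 ⟨(hmem _).2 ⟨z, ⟨h.1, hzB⟩, rfl⟩, Finset.mem_univ _⟩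
      obtain ⟨w, hw, hwz⟩ := Finset.mem_image.1 h1
      obtain ⟨hwz', hwB⟩ := Finset.mem_erase.1 hw
      by_cases hwx : w = x
      · subst hwx
        exact h.2 (hinj (by simp [h.1, hzB]) (by simp [hyx, hyB]) (by rw [hy, hwz]))
      · exact hwz' (hinj (by simp [hwx, hwB]) (by simp [h.1, hzB]) hwz)
    · rintro (rfl | rfl)
      · exact ⟨hxB, hx⟩
      · refine ⟨hyB, ?_⟩
        rw [← hx]
        ext i
        simp only [Finset.mem_image, Finset.mem_erase]
        constructor
        · rintro ⟨b, ⟨h1, h2⟩, rfl⟩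
          by_cases hb : b = x
          · exact ⟨z, ⟨hyx, hyB⟩, by rw [hy, hb]⟩
          · exact ⟨b, ⟨hb, h2⟩, rfl⟩
        · rintro ⟨b, ⟨h1, h2⟩, rfl⟩
          by_cases hb : b = z
          · exact ⟨x, ⟨hyx.symm, hxB⟩, by rw [hb, hy]⟩
          · exact ⟨b, ⟨hb, h2⟩, rfl⟩
  rw [this, Finset.card_pair hyx.symm]
  exact even_two

theorem even_of_fibers {A C : Type*} [DecidableEq C] (P : Finset A) (g : A → C)
    (h : ∀ a ∈ P, Even (P.filter (fun p => g p = g a)).card) : Even P.card := by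
  rw [Finset.card_eq_sum_card_image g P]
  apply Finset.even_sum
  intro c hc
  obtain ⟨a, ha, rfl⟩ := Finset.mem_image.1 hc
  exact h a ha

theorem scarf {T I α : Type*} [LinearOrder α] [Fintype T] [DecidableEq T] [Fintype I]
    [DecidableEq I] (r : I → T ⊕ I → α) (hr : ∀ i, Function.Injective (r i))
    (h1 : ∀ k t, r k (Sum.inr k) < r k (Sum.inl t))
    (h2 : ∀ k j t, j ≠ k → r k (Sum.inl t) < r k (Sum.inr j))
    (t0 : T) (c : T → I) :
    ∃ B : Finset (T ⊕ I), Dom r B ∧ B.image (Sum.elim c id) = Finset.univ := by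
  classical
  by_contra hno
  push Not at hno
  set col : T ⊕ I → I := Sum.elim c id with hcol
  set i0 : I := c t0
  let P : Finset (Finset (T ⊕ I) × (T ⊕ I)) := Finset.univ.filter (fun p =>
    p.2 ∈ p.1 ∧ Dom r p.1 ∧ p.1.card = Fintype.card I ∧
      (p.1.erase p.2).image col = Finset.univ.erase i0)
  let Q : Finset (Finset (T ⊕ I) × (T ⊕ I)) := Finset.univ.filter (fun p =>
    p.2 ∉ p.1 ∧ Dom r (insert p.2 p.1) ∧ p.1.card + 1 = Fintype.card I ∧
      p.1.image col = Finset.univ.erase i0)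
  have hPQ : P.card = Q.card := by
    refine Finset.card_bij' (fun p _ => (p.1.erase p.2, p.2)) (fun p _ => (insert p.2 p.1, p.2))
      ?_ ?_ ?_ ?_
    · rintro ⟨B, x⟩ hp
      simp only [P, Q, Finset.mem_filter, Finset.mem_univ, true_and] at hp ⊢
      obtain ⟨ha, hb, hc, hd⟩ := hp
      refine ⟨Finset.notMem_erase _ _, ?_, ?_, hd⟩
      · rwa [Finset.insert_erase ha]
      · rw [Finset.card_erase_add_one ha, hc]
    · rintro ⟨B, x⟩ hp
      simp only [P, Q, Finset.mem_filter, Finset.mem_univ, true_and] at hp ⊢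
      obtain ⟨ha, hb, hc, hd⟩ := hp
      refine ⟨Finset.mem_insert_self _ _, hb, ?_, ?_⟩
      · rw [Finset.card_insert_of_notMem ha, hc]
      · rwa [Finset.erase_insert ha]
    · rintro ⟨B, x⟩ hp
      simp only [P, Finset.mem_filter, Finset.mem_univ, true_and] at hp
      simp [Finset.insert_erase hp.1]
    · rintro ⟨B, x⟩ hp
      simp only [Q, Finset.mem_filter, Finset.mem_univ, true_and] at hp
      simp [Finset.erase_insert hp.1]
  have hP : Even P.card := by
    apply even_of_fibers P Prod.fst
    rintro ⟨B, x⟩ hp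
    simp only [P, Finset.mem_filter, Finset.mem_univ, true_and] at hp
    obtain ⟨ha, hb, hc, hd⟩ := hp
    convert room_even col i0 B hc (hno B hb) using 1
    refine Finset.card_bij' (fun p _ => p.2) (fun y _ => (B, y)) ?_ ?_ ?_ ?_
    · rintro ⟨B', y⟩ hq
      simp only [P, Finset.mem_filter, Finset.mem_univ, true_and] at hq ⊢
      obtain ⟨⟨h1, h2, h3, h4⟩, rfl⟩ := hq
      exact ⟨h1, h4⟩
    · intro y hy
      simp only [P, Finset.mem_filter, Finset.mem_univ, true_and] at hy ⊢
      exact ⟨⟨hy.1, hb, hc, hy.2⟩, trivial⟩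
    · rintro ⟨B', y⟩ hq
      simp only [Finset.mem_filter] at hq
      rw [hq.2]
    · intro y hy; rfl
  -- the outside door
  let O : Finset (T ⊕ I) := (Finset.univ.erase i0).image Sum.inr
  obtain ⟨tm, -, htm⟩ := Finset.exists_max_image (Finset.univ : Finset T)
    (fun t => r i0 (Sum.inl t)) ⟨t0, Finset.mem_univ _⟩
  have hOmem : ∀ j, Sum.inr j ∈ O ↔ j ≠ i0 := by intro j; simp [O]
  have hOmem' : ∀ t, Sum.inl t ∉ O := by intro j; simp [O]
  have hOcard : O.card + 1 = Fintype.card I := by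
    rw [Finset.card_image_of_injective _ Sum.inr_injective,
      Finset.card_erase_add_one (Finset.mem_univ _), Finset.card_univ]
  have hOimg : O.image col = Finset.univ.erase i0 := by
    ext i; simp [O, hcol]
  have hOroom : ∀ z, (z ∉ O ∧ Dom r (insert z O)) ↔ z = Sum.inl tm := by
    intro z
    constructor
    · rintro ⟨hz, hd⟩
      have hkey : ∀ t, r i0 (Sum.inl t) ≤ r i0 z := by
        intro t
        obtain ⟨k, hk⟩ := hd (Sum.inl t)
        have : k = i0 := by
          by_contra h
          exact absurd (hk (Sum.inr k) (Finset.mem_insert_of_mem ((hOmem k).2 h)))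
            (not_le.2 (h1 k t))
        subst this
        exact hk _ (Finset.mem_insert_self _ _)
      rcases z with t | j
      · have := hr i0 (le_antisymm (hkey tm) (htm t (Finset.mem_univ _)))
        exact this.symm
      · have hj : j = i0 := by
          by_contra h
          exact hz ((hOmem j).2 h)
        subst hj
        exact absurd (hkey t0) (not_le.2 (h1 _ _))
    · rintro rfl
      refine ⟨hOmem' _, ?_⟩
      rintro (t | j)
      · refine ⟨i0, fun b hb => ?_⟩
        rcases Finset.mem_insert.1 hb with rfl | hb
        · exact htm t (Finset.mem_univ _)
        · rcases b with t' | j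
          · exact absurd hb (hOmem' _)
          · exact (h2 i0 j t ((hOmem j).1 hb)).le
      · refine ⟨j, fun b hb => ?_⟩
        rcases b with t' | j'
        · exact (h1 _ _).le
        · by_cases h : j' = j
          · rw [h]
          · exact ((h1 j t0).trans (h2 j j' t0 h)).le
  have hOQ : (O, Sum.inl tm) ∈ Q := by
    simp only [Q, Finset.mem_filter, Finset.mem_univ, true_and]
    have := (hOroom (Sum.inl tm)).2 rfl
    exact ⟨this.1, this.2, hOcard, hOimg⟩
  have hQ : Even (Q.erase (O, Sum.inl tm)).card := by
    apply even_of_fibers _ Prod.fst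
    rintro ⟨D, x⟩ hp
    simp only [Q, Finset.mem_erase, Finset.mem_filter, Finset.mem_univ, true_and] at hp
    obtain ⟨hne, ha, hb, hc, hd⟩ := hp
    have hDO : D ≠ O := by
      rintro rfl
      apply hne
      rw [(hOroom x).1 ⟨ha, hb⟩]
    have hDt : ∃ t, Sum.inl t ∈ D := by
      by_contra hnt
      push Not at hnt
      apply hDO
      apply Finset.eq_of_subset_of_card_le
      · rintro (t | j) hj
        · exact absurd hj (hnt t)
        · rw [hOmem]
          have : col (Sum.inr j) ∈ D.image col := Finset.mem_image_of_mem _ hj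
          rw [hd] at this
          exact (Finset.mem_erase.1 this).1
      · omega
    obtain ⟨t, ht⟩ := hDt
    obtain ⟨u, v, huv, hiff⟩ := two_rooms r hr D (hb.mono (Finset.subset_insert _ _)) ⟨_, ht⟩ hc
      (fun i => ⟨Sum.inr i, fun k hk => ⟨_, ht, h2 k i t hk.symm⟩⟩)
    have : (Q.erase (O, Sum.inl tm)).filter (fun p => p.1 = D) = {(D, u), (D, v)} := by
      ext ⟨D', z⟩
      simp only [Q, Finset.mem_erase, Finset.mem_filter, Finset.mem_univ, true_and,
        Finset.mem_insert, Finset.mem_singleton, Prod.mk.injEq]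
      constructor
      · rintro ⟨⟨-, h1, h2, -, -⟩, rfl⟩
        rcases (hiff z).1 ⟨h1, h2⟩ with h | h
        · exact Or.inl ⟨rfl, h⟩
        · exact Or.inr ⟨rfl, h⟩
      · intro h
        have h' : D' = D ∧ (z = u ∨ z = v) := by tauto
        obtain ⟨rfl, h''⟩ := h'
        have := (hiff z).2 h''
        exact ⟨⟨fun h => hDO (congrArg Prod.fst h), this.1, this.2, hc, hd⟩, rfl⟩
    rw [this, Finset.card_pair (by simpa using huv)]
    exact even_two
  rw [← Finset.card_erase_add_one hOQ] at hPQ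
  rw [hPQ] at hP
  exact absurd hQ (by simpa [Nat.even_add_one] using hP)


theorem grid {I : Type*} [Fintype I] [DecidableEq I] [Nonempty I] (N : ℕ)
    (c : (Finset.piAntidiag (Finset.univ : Finset I) N) → I) :
    ∃ (S : Finset (Finset.piAntidiag (Finset.univ : Finset I) N)) (C : Finset I), S.Nonempty ∧
      (∀ i ∈ C, ∃ s ∈ S, c s = i) ∧ (∀ i ∉ C, ∀ s ∈ S, s.1 i ≤ Fintype.card I) ∧
      ∀ s ∈ S, ∀ s' ∈ S, ∀ i ∈ C, s.1 i ≤ s'.1 i + Fintype.card I := by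
  classical
  have hsum : ∀ a : (Finset.piAntidiag (Finset.univ : Finset I) N), ∑ i, a.1 i = N :=
    fun a => (Finset.mem_piAntidiag.1 a.2).1
  have hle : ∀ (a : (Finset.piAntidiag (Finset.univ : Finset I) N)) i, a.1 i ≤ N := by
    intro a i
    refine le_of_le_of_eq ?_ (hsum a)
    exact Finset.single_le_sum (f := a.1) (fun _ _ => Nat.zero_le _) (Finset.mem_univ i)
  let eT := Fintype.equivFin (Finset.piAntidiag (Finset.univ : Finset I) N)
  let eI := Fintype.equivFin I
  let r : I → (Finset.piAntidiag (Finset.univ : Finset I) N) ⊕ I → ℕ ×ₗ ℕ := fun k v =>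
    Sum.elim (fun a => toLex (a.1 k + 1, (eT a : ℕ)))
      (fun j => if j = k then toLex (0, 0) else toLex (N + 2, (eI j : ℕ))) v
  have hrl : ∀ k a, r k (Sum.inl a) = toLex (a.1 k + 1, (eT a : ℕ)) := fun _ _ => rfl
  have hrr : ∀ k j, r k (Sum.inr j) = if j = k then toLex (0, 0) else toLex (N + 2, (eI j : ℕ)) :=
    fun _ _ => rfl
  have h1 : ∀ k t, r k (Sum.inr k) < r k (Sum.inl t) := by
    intro k t
    rw [hrl, hrr, if_pos rfl, Prod.Lex.toLex_lt_toLex]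
    left; simp
  have h2 : ∀ k j t, j ≠ k → r k (Sum.inl t) < r k (Sum.inr j) := by
    intro k j t hj
    rw [hrl, hrr, if_neg hj, Prod.Lex.toLex_lt_toLex]
    left
    have := hle t k
    simp only; omega
  have hr : ∀ k, Function.Injective (r k) := by
    intro k
    rintro (a | i) (b | j) h
    · rw [hrl, hrl, toLex_inj, Prod.mk.injEq] at h
      rw [eT.injective (Fin.ext h.2)]
    · by_cases hj : j = k
      · subst hj; exact absurd h (h1 _ _).ne'
      · exact absurd h (h2 _ _ _ hj).ne
    · by_cases hj : i = k
      · subst hj; exact absurd h (h1 _ _).ne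
      · exact absurd h (h2 _ _ _ hj).ne'
    · rw [hrr, hrr] at h
      split_ifs at h with ha hb hb
      · rw [ha, hb]
      · rw [toLex_inj, Prod.mk.injEq] at h; omega
      · rw [toLex_inj, Prod.mk.injEq] at h; omega
      · rw [toLex_inj, Prod.mk.injEq] at h
        rw [eI.injective (Fin.ext h.2)]
  obtain ⟨t0, ht0⟩ : (Finset.piAntidiag (Finset.univ : Finset I) N).Nonempty := by
    obtain ⟨i⟩ := ‹Nonempty I›
    refine ⟨Pi.single i N, Finset.mem_piAntidiag.2 ⟨?_, fun _ _ => Finset.mem_univ _⟩⟩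
    simp
  obtain ⟨B, hB, hcol⟩ := scarf r hr h1 h2 ⟨t0, ht0⟩ c
  have hcol' : ∀ i, ∃ b ∈ B, Sum.elim c id b = i := by
    intro i
    have : i ∈ B.image (Sum.elim c id) := by rw [hcol]; exact Finset.mem_univ _
    simpa only [Finset.mem_image] using this
  let S := Finset.univ.filter (fun t : (Finset.piAntidiag (Finset.univ : Finset I) N) =>
    Sum.inl t ∈ B)
  let C := Finset.univ.filter (fun i : I => Sum.inr i ∉ B)
  have hS : ∀ t, t ∈ S ↔ Sum.inl t ∈ B := by intro t; simp [S]
  have hC : ∀ t, t ∈ C ↔ Sum.inr t ∉ B := by intro t; simp [C]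
  -- dominance restated
  have hdom : ∀ t : (Finset.piAntidiag (Finset.univ : Finset I) N), ∃ i ∈ C, ∀ s ∈ S,
      t.1 i ≤ s.1 i := by
    intro t
    obtain ⟨i, hi⟩ := hB (Sum.inl t)
    refine ⟨i, (hC i).2 fun h => absurd (hi _ h) (not_le.2 (h1 i t)), fun s hs => ?_⟩
    have := hi _ ((hS s).1 hs)
    rw [hrl, hrl, Prod.Lex.toLex_le_toLex] at this
    simp only at this
    omega
  have hcS : ∀ i ∈ C, ∃ s ∈ S, c s = i := by
    intro i hi
    obtain ⟨b, hb, hbi⟩ := hcol' i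
    rcases b with s | j
    · exact ⟨s, (hS s).2 hb, hbi⟩
    · have : j = i := hbi
      subst this
      exact absurd hb ((hC _).1 hi)
  obtain ⟨i1, hi1, -⟩ := hdom ⟨t0, ht0⟩
  have hSne : S.Nonempty := by
    obtain ⟨s, hs, -⟩ := hcS i1 hi1
    exact ⟨s, hs⟩
  have hμ0 : ∀ i, ∃ s ∈ S, ∀ s' ∈ S, s.1 i ≤ s'.1 i :=
    fun i => S.exists_min_image (fun s => s.1 i) hSne
  choose ms hmsS hms using hμ0
  have hbig : N < ∑ i ∈ C, ((ms i).1 i + 1) := by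
    by_contra hcon
    push Not at hcon
    let t : I → ℕ := fun i => (if i ∈ C then (ms i).1 i + 1 else 0) +
      (Pi.single i1 (N - ∑ i ∈ C, ((ms i).1 i + 1)) : I → ℕ) i
    have ht : t ∈ Finset.piAntidiag (Finset.univ : Finset I) N := by
      refine Finset.mem_piAntidiag.2 ⟨?_, fun _ _ => Finset.mem_univ _⟩
      simp only [t]
      rw [Finset.sum_add_distrib, Finset.sum_ite_mem, Finset.univ_inter]
      rw [Finset.sum_pi_single' , if_pos (Finset.mem_univ _)]
      omega
    obtain ⟨i, hi, h⟩ := hdom ⟨t, ht⟩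
    have := h (ms i) (hmsS i)
    simp only [t, if_pos hi] at this
    omega
  rw [Finset.sum_add_distrib, Finset.sum_const, smul_eq_mul, mul_one] at hbig
  have hCc : C.card ≤ Fintype.card I := Finset.card_le_univ C
  refine ⟨S, C, hSne, hcS, ?_, ?_⟩
  · intro i hi s hs
    have e1 : ∑ k ∈ insert i C, s.1 k ≤ N := by
      refine le_of_le_of_eq ?_ (hsum s)
      exact Finset.sum_le_sum_of_subset (Finset.subset_univ _)
    rw [Finset.sum_insert hi] at e1
    have e2 : ∑ k ∈ C, (ms k).1 k ≤ ∑ k ∈ C, s.1 k := Finset.sum_le_sum fun k _ => hms k s hs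
    omega
  · intro s hs s' hs' i hi
    have e1 : ∑ k ∈ C, s.1 k ≤ N := by
      refine le_of_le_of_eq ?_ (hsum s)
      exact Finset.sum_le_sum_of_subset (Finset.subset_univ _)
    rw [← Finset.add_sum_erase C _ hi] at e1 hbig
    have e2 : ∑ k ∈ C.erase i, (ms k).1 k ≤ ∑ k ∈ C.erase i, s.1 k :=
      Finset.sum_le_sum fun k _ => hms k s hs
    have e3 := hms i s' hs'
    omega

theorem brouwer_approx {I : Type*} [Fintype I] [DecidableEq I] [Nonempty I]
    (f : stdSimplex ℝ I → stdSimplex ℝ I) (hf : Continuous f) (ε : ℝ) (hε : 0 < ε) :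
    ∃ x : stdSimplex ℝ I, ∀ i, x.1 i - ε ≤ (f x).1 i := by
  classical
  have huc : UniformContinuous f := by
    have : CompactSpace (stdSimplex ℝ I) := isCompact_iff_compactSpace.1 (isCompact_stdSimplex ℝ I)
    exact CompactSpace.uniformContinuous_of_continuous hf
  obtain ⟨δ, hδ, hfδ⟩ := Metric.uniformContinuous_iff.1 huc (ε / 2) (by positivity)
  set K : ℝ := (Fintype.card I : ℝ)
  have hK : 0 ≤ K := Nat.cast_nonneg _
  obtain ⟨N, hN⟩ := exists_nat_gt (K / min δ (ε / 2) + 1)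
  have hmin : 0 < min δ (ε / 2) := lt_min hδ (by positivity)
  have hN0 : (0 : ℝ) < N := lt_of_le_of_lt (by positivity) hN
  have hKN : K / N < min δ (ε / 2) := by
    rw [div_lt_iff₀ hN0]
    have : K / min δ (ε / 2) < N := by linarith
    rw [div_lt_iff₀ hmin] at this
    linarith
  have hK1 : K / N < δ := hKN.trans_le (min_le_left _ _)
  have hK2 : K / N < ε / 2 := hKN.trans_le (min_le_right _ _)
  have hsum : ∀ a : (Finset.piAntidiag (Finset.univ : Finset I) N), ∑ i, a.1 i = N :=
    fun a => (Finset.mem_piAntidiag.1 a.2).1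
  let pt : (Finset.piAntidiag (Finset.univ : Finset I) N) → stdSimplex ℝ I := fun a =>
    ⟨fun i => (a.1 i : ℝ) / N, fun i => by positivity, by
      rw [← Finset.sum_div, ← Nat.cast_sum, hsum a, div_self hN0.ne']⟩
  have hpt : ∀ a i, (pt a).1 i = (a.1 i : ℝ) / N := fun _ _ => rfl
  have hc0 : ∀ a, ∃ i, (pt a).1 i ≤ (f (pt a)).1 i := by
    intro a
    by_contra h
    push Not at h
    have := Finset.sum_lt_sum_of_nonempty (Finset.univ_nonempty (α := I)) (fun i _ => h i)
    rw [(pt a).2.2, (f (pt a)).2.2] at this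
    exact lt_irrefl _ this
  choose c hc using hc0
  obtain ⟨S, C, ⟨s0, hs0⟩, hCS, hout, hin⟩ := grid N c
  have hclose : ∀ s ∈ S, ∀ s' ∈ S, ∀ i, (pt s).1 i ≤ (pt s').1 i + K / N := by
    intro s hs s' hs' i
    rw [hpt, hpt, ← add_div]
    apply div_le_div_of_nonneg_right _ hN0.le
    have : s.1 i ≤ s'.1 i + Fintype.card I := by
      by_cases hi : i ∈ C
      · exact hin s hs s' hs' i hi
      · have := hout i hi s hs; omega
    simp only [K]
    exact_mod_cast this
  refine ⟨pt s0, fun i => ?_⟩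
  by_cases hi : i ∈ C
  · obtain ⟨s, hs, rfl⟩ := hCS i hi
    have hd : dist (pt s) (pt s0) < δ := by
      refine lt_of_le_of_lt ?_ hK1
      rw [Subtype.dist_eq, dist_pi_le_iff (by positivity)]
      intro i
      rw [Real.dist_eq, abs_le]
      constructor
      · linarith [hclose s0 hs0 s hs i]
      · linarith [hclose s hs s0 hs0 i]
    have h1 := hfδ hd
    have h2 : dist ((f (pt s)).1 (c s)) ((f (pt s0)).1 (c s)) ≤ dist (f (pt s)) (f (pt s0)) := by
      rw [Subtype.dist_eq]; exact dist_le_pi_dist _ _ _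
    have h3 := (abs_lt.1 (Real.dist_eq _ _ ▸ (h2.trans_lt h1))).2
    have h4 := hc s
    have h5 := hclose s0 hs0 s hs (c s)
    linarith
  · have h1 : (0:ℝ) ≤ (f (pt s0)).1 i := (f (pt s0)).2.1 i
    have h2 : (pt s0).1 i ≤ K / N := by
      rw [hpt]
      apply div_le_div_of_nonneg_right _ hN0.le
      simp only [K]
      exact_mod_cast hout i hi s0 hs0
    linarith

theorem brouwer {I : Type*} [Fintype I] [DecidableEq I] [Nonempty I]
    (f : stdSimplex ℝ I → stdSimplex ℝ I) (hf : Continuous f) : ∃ x, f x = x := by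
  classical
  have : CompactSpace (stdSimplex ℝ I) := isCompact_iff_compactSpace.1 (isCompact_stdSimplex ℝ I)
  let g : stdSimplex ℝ I → ℝ := fun x =>
    Finset.univ.inf' Finset.univ_nonempty (fun i => (f x).1 i - x.1 i)
  have hg : Continuous g := by
    apply Continuous.finset_inf'_apply
    intro i _
    have h1 : Continuous fun x => (f x).1 i :=
      (continuous_apply i).comp (continuous_subtype_val.comp hf)
    have h2 : Continuous fun x : stdSimplex ℝ I => x.1 i :=
      (continuous_apply i).comp continuous_subtype_val
    exact h1.sub h2
  obtain ⟨x1, -⟩ := brouwer_approx f hf 1 one_pos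
  obtain ⟨x, -, hx⟩ := isCompact_univ.exists_isMaxOn ⟨x1, Set.mem_univ _⟩ hg.continuousOn
  have h0 : 0 ≤ g x := by
    by_contra h
    push Not at h
    obtain ⟨y, hy⟩ := brouwer_approx f hf (-g x / 2) (by linarith)
    have h1 : g y ≤ g x := hx (Set.mem_univ y)
    have h2 : g x / 2 ≤ g y := by
      apply Finset.le_inf'
      intro i _
      linarith [hy i]
    linarith
  have h1 : ∀ i, x.1 i ≤ (f x).1 i := by
    intro i
    have : g x ≤ (f x).1 i - x.1 i := Finset.inf'_le _ (Finset.mem_univ i)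
    linarith
  refine ⟨x, Subtype.ext (funext fun i => ?_)⟩
  have h2 : ∑ i, x.1 i = ∑ i, (f x).1 i := by rw [x.2.2, (f x).2.2]
  exact ((Finset.sum_eq_sum_iff_of_le fun i _ => h1 i).1 h2 i (Finset.mem_univ i)).symm

open unitInterval

/-- Iterated convex combination. -/
def comb {Y : Type*} (W : Y → Y → I → Y) (x : ℕ → Y) : ℕ → (ℕ → I) → Y
  | 0, _ => x 0
  | k + 1, t => W (x k) (comb W x k t) (t k)

theorem comb_continuous {Y : Type*} [TopologicalSpace Y] (W : Y → Y → I → Y)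
    (hW : Continuous fun p : Y × Y × I => W p.1 p.2.1 p.2.2) (x : ℕ → Y) (n : ℕ) :
    Continuous (comb W x n) := by
  induction n with
  | zero => exact continuous_const
  | succ k ih =>
    exact hW.comp (continuous_const.prodMk (ih.prodMk (continuous_apply k)))

theorem comb_congr {Y : Type*} (W : Y → Y → I → Y) (x : ℕ → Y) (n : ℕ) (t t' : ℕ → I)
    (h : ∀ k < n, t k = t' k) : comb W x n t = comb W x n t' := by
  induction n with
  | zero => rfl
  | succ k ih =>
    simp only [comb]
    rw [h k (by omega), ih fun j hj => h j (by omega)]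

/-- weights -/
noncomputable def wt {Y : Type*} [MetricSpace Y] (x : ℕ → Y) (ε : ℝ) (y : Y) (k : ℕ) : I :=
  Set.projIcc 0 1 zero_le_one ((dist y (x k) - ε) / ε)

theorem comb_close {Y : Type*} [MetricSpace Y] (W : Y → Y → I → Y)
    (hW : ∀ (u x y : Y) (t : I), dist u (W x y t) ≤ (1 - (t : ℝ)) * dist u x + t * dist u y)
    (x : ℕ → Y) (ε : ℝ) (hε : 0 < ε) (y : Y) (n : ℕ) (h : ∃ k < n, dist y (x k) < ε) :
    dist y (comb W x n (wt x ε y)) ≤ 2 * ε := by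
  induction n with
  | zero => obtain ⟨k, hk, -⟩ := h; omega
  | succ n ih =>
    have h1 := hW y (x n) (comb W x n (wt x ε y)) (wt x ε y n)
    simp only [comb]
    by_cases hn : dist y (x n) ≤ ε
    · have : wt x ε y n = 0 := by
        apply Set.projIcc_of_le_left
        exact div_nonpos_of_nonpos_of_nonneg (by linarith) hε.le
      rw [this] at h1 ⊢
      simp only [Set.Icc.coe_zero] at h1
      linarith
    · have ih' := ih (by
        obtain ⟨k, hk, hd⟩ := h
        refine ⟨k, lt_of_le_of_ne (by omega) ?_, hd⟩
        rintro rfl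
        exact hn hd.le)
      by_cases hn2 : 2 * ε ≤ dist y (x n)
      · have : wt x ε y n = 1 := by
          apply Set.projIcc_of_right_le
          rw [le_div_iff₀ hε]; linarith
        rw [this] at h1 ⊢
        simp only [Set.Icc.coe_one] at h1
        linarith
      · have ha := (wt x ε y n).2.1
        have hb := (wt x ε y n).2.2
        push Not at hn2
        nlinarith

theorem fixed_approx {Y : Type*} [MetricSpace Y] [CompactSpace Y] [Nonempty Y] (W : Y → Y → I → Y)
    (hWc : Continuous fun p : Y × Y × I => W p.1 p.2.1 p.2.2)
    (hW : ∀ (u x y : Y) (t : I), dist u (W x y t) ≤ (1 - (t : ℝ)) * dist u x + t * dist u y)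
    (f : Y → Y) (hf : Continuous f) (ε : ℝ) (hε : 0 < ε) : ∃ y, dist (f y) y ≤ 2 * ε := by
  classical
  let x := TopologicalSpace.denseSeq Y
  obtain ⟨n, hn⟩ : ∃ n, ∀ y, ∃ k < n, dist y (x k) < ε := by
    obtain ⟨s, hs⟩ := isCompact_univ.elim_finite_subcover (fun k => Metric.ball (x k) ε)
      (fun k => Metric.isOpen_ball) (by
        intro y _
        obtain ⟨k, hk⟩ := (TopologicalSpace.denseRange_denseSeq Y).exists_dist_lt y hε
        exact Set.mem_iUnion.2 ⟨k, hk⟩)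
    refine ⟨s.sup id + 1, fun y => ?_⟩
    have := hs (Set.mem_univ y)
    simp only [Set.mem_iUnion, exists_prop] at this
    obtain ⟨k, hk, hd⟩ := this
    exact ⟨k, Nat.lt_succ_of_le (Finset.le_sup (f := id) hk), hd⟩
  -- the simplex to the cube and back
  let τ : stdSimplex ℝ (Option (Fin n)) → ℕ → I := fun l k =>
    if h : k < n then Set.projIcc 0 1 zero_le_one ((n + 1) * l.1 (some ⟨k, h⟩)) else 0
  have hτ : Continuous τ := by
    apply continuous_pi
    intro k
    by_cases h : k < n
    · simp only [τ, dif_pos h]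
      exact continuous_projIcc.comp (continuous_const.mul
        ((continuous_apply _).comp continuous_subtype_val))
    · simp only [τ, dif_neg h]
      exact continuous_const
  have hn1 : (0 : ℝ) < n + 1 := by positivity
  let ι : (ℕ → I) → stdSimplex ℝ (Option (Fin n)) := fun t =>
    ⟨fun o => o.elim (1 - ∑ k : Fin n, (t k : ℝ) / (n + 1)) (fun k => (t k : ℝ) / (n + 1)), by
      constructor
      · rintro (_ | k)
        · simp only [Option.elim]
          rw [← Finset.sum_div, sub_nonneg, div_le_one hn1]
          calc ∑ k : Fin n, (t k : ℝ) ≤ ∑ k : Fin n, (1 : ℝ) :=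
                Finset.sum_le_sum fun k _ => (t k).2.2
            _ ≤ n + 1 := by simp
        · exact div_nonneg (t k).2.1 hn1.le
      · rw [Fintype.sum_option]
        simp⟩
  have hι : Continuous ι := by
    apply Continuous.subtype_mk
    apply continuous_pi
    have hk : ∀ k : ℕ, Continuous fun t : ℕ → I => (t k : ℝ) / (n + 1) := fun k =>
      (continuous_subtype_val.comp (continuous_apply k)).div_const _
    rintro (_ | k)
    · exact continuous_const.sub (continuous_finsetSum _ fun k _ => hk k)
    · exact hk k
  have hτι : ∀ t, ∀ k < n, τ (ι t) k = t k := by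
    intro t k hk
    simp only [τ, dif_pos hk, ι, Option.elim]
    rw [mul_div_cancel₀ _ hn1.ne']
    exact Set.projIcc_val _ _
  have hwt : Continuous (wt x ε) := by
    apply continuous_pi
    intro k
    exact continuous_projIcc.comp
      (((continuous_id.dist continuous_const).sub continuous_const).div_const _)
  obtain ⟨l, hl⟩ := brouwer (fun l => ι (wt x ε (f (comb W x n (τ l)))))
    (hι.comp (hwt.comp (hf.comp ((comb_continuous W hWc x n).comp hτ))))
  refine ⟨comb W x n (τ l), ?_⟩
  have key : comb W x n (τ l) = comb W x n (wt x ε (f (comb W x n (τ l)))) := by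
    apply comb_congr
    intro k hk
    rw [← hτι (wt x ε (f (comb W x n (τ l)))) k hk, hl]
  have := comb_close W hW x ε hε (f (comb W x n (τ l))) n (hn _)
  rwa [← key] at this

theorem fixed {Y : Type*} [MetricSpace Y] [CompactSpace Y] [Nonempty Y] (W : Y → Y → I → Y)
    (hWc : Continuous fun p : Y × Y × I => W p.1 p.2.1 p.2.2)
    (hW : ∀ (u x y : Y) (t : I), dist u (W x y t) ≤ (1 - (t : ℝ)) * dist u x + t * dist u y)
    (f : Y → Y) (hf : Continuous f) : ∃ y, f y = y := by
  obtain ⟨y, -, hy⟩ := isCompact_univ.exists_isMinOn (Set.univ_nonempty (α := Y))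
    (hf.dist continuous_id).continuousOn
  refine ⟨y, ?_⟩
  by_contra hne
  have hpos : 0 < dist (f y) y := dist_pos.2 hne
  obtain ⟨z, hz⟩ := fixed_approx W hWc hW f hf (dist (f y) y / 4) (by positivity)
  have : dist (f y) y ≤ dist (f z) z := hy (Set.mem_univ z)
  linarith

end Scarf

/-- In a strictly convex complete convex metric space, every
continuous self-map of a nonempty compact convex subset `Y` has a fixed point. -/
theorem stmt_19 {X : Type*} [MetricSpace X] [CompleteSpace X] (W : X → X → ℝ → X)
    (hWcont : ContinuousOn (fun p : X × X × ℝ => W p.1 p.2.1 p.2.2)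
      (Set.univ ×ˢ Set.univ ×ˢ Set.Icc (0:ℝ) 1))
    (hW : ∀ (u x y : X), ∀ t ∈ Set.Icc (0:ℝ) 1,
      dist u (W x y t) ≤ (1 - t) * dist u x + t * dist u y)
    (hSC : ∀ (x₀ : X) (ρ : ℝ), 0 < ρ → ∀ x y : X, x ≠ y →
      dist x x₀ = ρ → dist y x₀ = ρ → ∀ t ∈ Set.Ioo (0:ℝ) 1,
        dist (W x y t) x₀ < ρ)
    (Y : Set X) (hYne : Y.Nonempty) (hYcp : IsCompact Y)
    (hYconv : ∀ x ∈ Y, ∀ y ∈ Y, ∀ t ∈ Set.Icc (0:ℝ) 1, W x y t ∈ Y)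
    (f : Y → Y) (hf : Continuous f) :
    ∃ y : Y, f y = y := by
  have : CompactSpace Y := isCompact_iff_compactSpace.1 hYcp
  have : Nonempty Y := hYne.to_subtype
  refine Scarf.fixed (Y := Y) (fun x y t => ⟨W x y t, hYconv x x.2 y y.2 t t.2⟩) ?_
    (fun u x y t => hW u x y t t.2) f hf
  apply Continuous.subtype_mk
  have hc : Continuous fun p : Y × Y × unitInterval =>
      ((p.1 : X), (p.2.1 : X), (p.2.2 : ℝ)) := by fun_prop
  exact hWcont.comp_continuous hc fun p => ⟨trivial, trivial, p.2.2.2⟩
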